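/- arXiv:2304.08358 — 2 statements merged into one kernel-verified Lean document; each statement's English description precedes it below -/
import Mathlib

section
/- Let C ∈ ℝ and let f : S¹ → ℝ satisfy: (A) f(x) + f(−x) = πC for all x ∈ S¹; and (B) f is Lipschitz continuous, left-differentiable at every point of S¹, and ‖∂₋f‖_TV(S¹) < ∞. Then there exists a signed Borel measure λ on S¹ with T_#λ = −λ such that f(x) = ∫_{S¹} d_{S¹}(x,y) (λ + C·H¹)(dy) for all x ∈ S¹. -/
open MeasureTheory Real Filter Set Complex
open scoped ENNReal NNReal Classical

noncomputable section

instance : MeasurableSpace Circle := borel Circle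
instance : BorelSpace Circle := ⟨rfl⟩

namespace CirclePaper

/-- The spherical (arc-length) distance on the unit circle `S¹ ⊆ ℝ² ≃ ℂ`:
`d_{S¹}(x,y) = arccos ⟨x,y⟩ = arccos (Re (x * conj y))`. -/
def dS1 (x y : Circle) : ℝ := Real.arccos (((x : ℂ) * (starRingEnd ℂ) (y : ℂ)).re)

/-- The antipodal map `T x = -x` (multiplication by `exp(iπ) = -1`). -/
def antipode (x : Circle) : Circle := Circle.exp π * x

/-- Integral of a function against a signed measure (via the Jordan decomposition). -/
def sInt (l : SignedMeasure Circle) (f : Circle → ℝ) : ℝ :=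
  (∫ y, f y ∂l.toJordanDecomposition.posPart) - (∫ y, f y ∂l.toJordanDecomposition.negPart)

/-- `f_λ(x) = ∫_{S¹} d_{S¹}(x,y) λ(dy)`. -/
def fRep (l : SignedMeasure Circle) (x : Circle) : ℝ := sInt l (fun y => dS1 x y)

/-- `f : S¹ → ℝ` has left derivative `L` at `x` w.r.t. the covering `q(t) = exp(it)`,
i.e. `(f(x +_q t) - f(x))/t → L` as `t → 0⁻`. -/
def HasLeftDerivCircleAt (f : Circle → ℝ) (L : ℝ) (x : Circle) : Prop :=
  Filter.Tendsto (fun t : ℝ => (f (Circle.exp t * x) - f x) / t)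
    (nhdsWithin 0 (Set.Iio 0)) (nhds L)

/-- `h : ℝ → ℝ` has left derivative `L` at `t`: `(h(t+s) - h(t))/s → L` as `s → 0⁻`. -/
def HasLeftDerivAtR (h : ℝ → ℝ) (L : ℝ) (t : ℝ) : Prop :=
  Filter.Tendsto (fun s : ℝ => (h (t + s) - h t) / s)
    (nhdsWithin 0 (Set.Iio 0)) (nhds L)

/-- The total variation `‖g‖_{TV(S¹)}` of `g : S¹ → ℝ`: the supremum of
`Σ |g(q(t_i)) - g(q(t_{i+1}))|` over partitions `0 = t_0 ≤ … ≤ t_{n+1} = 2π`. -/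
def circleTV (g : Circle → ℝ) : ℝ≥0∞ := eVariationOn (g ∘ Circle.exp) (Set.Icc 0 (2 * π))

/-- `f` is Lipschitz continuous with respect to the spherical distance. -/
def LipschitzCircle (f : Circle → ℝ) : Prop := ∃ K : ℝ, ∀ x y, |f x - f y| ≤ K * dS1 x y

/-- The normalized Hausdorff 1-measure on `S¹`, i.e. the rotation-invariant Borel
probability measure (the pushforward of normalized Lebesgue measure on `[0, 2π)`). -/
def hausOne : Measure Circle :=
  (ENNReal.ofReal (2 * π))⁻¹ • Measure.map Circle.exp (volume.restrict (Set.Ico 0 (2 * π)))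

instance : IsFiniteMeasure hausOne := by
  constructor
  have h1 : (Measure.map Circle.exp (volume.restrict (Set.Ico 0 (2 * π)))) Set.univ
      = volume (Set.Ico 0 (2 * π)) := by
    rw [Measure.map_apply Circle.exp.continuous.measurable MeasurableSet.univ]
    simp
  simp only [hausOne, Measure.smul_apply, smul_eq_mul, h1, Real.volume_Ico]
  refine ENNReal.mul_lt_top ?_ ?_
  · exact ENNReal.inv_lt_top.mpr (ENNReal.ofReal_pos.mpr (by positivity))
  · exact ENNReal.ofReal_lt_top

/-- The half-open arc `[x, T(x)) = {x +_q t : t ∈ [0, π)}` of length `π` starting at `x`. -/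
def halfArc (x : Circle) : Set Circle := (fun t : ℝ => Circle.exp t * x) '' Set.Ico 0 π

/-- A Borel measure on the circle, regarded as a signed measure
(defined to be `0` if the measure is not finite). -/
def msigned (μ : Measure Circle) : SignedMeasure Circle :=
  if h : IsFiniteMeasure μ then @Measure.toSignedMeasure _ _ μ h else 0



lemma stieltjes_abs (P : StieltjesFunction ℝ) {t : ℝ} (h0 : 0 ≤ t) (h1 : t ≤ π) :
    ∫ s in Ioc 0 π, |t - s| ∂P.measure =
      (π - t) * P π - t * P 0 + (∫ u in (0:ℝ)..t, P u) - ∫ u in t..π, P u := by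
  have hpi := Real.pi_pos
  have hint : ∀ a b : ℝ, IntervalIntegrable (fun u => P u) volume a b := fun a b =>
    P.mono.intervalIntegrable
  let A : Set (ℝ × ℝ) := {z | (z.1 ≤ z.2 ∧ z.2 < t) ∨ (t ≤ z.2 ∧ z.2 < z.1)}
  have hA : MeasurableSet A := by
    apply MeasurableSet.union
    · exact (measurableSet_le measurable_fst measurable_snd).inter
        (measurableSet_lt measurable_snd measurable_const)
    · exact (measurableSet_le measurable_const measurable_snd).inter
        (measurableSet_lt measurable_snd measurable_fst)
  have : IsFiniteMeasure (P.measure.restrict (Ioc 0 π)) :=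
    ⟨by simp [P.measure_Ioc]⟩
  have : IsFiniteMeasure ((volume : Measure ℝ).restrict (Icc 0 π)) :=
    ⟨by simp⟩
  have hsw := integral_integral_swap (μ := P.measure.restrict (Ioc 0 π))
    (ν := (volume : Measure ℝ).restrict (Icc 0 π))
    (f := fun s u => A.indicator (fun _ => (1:ℝ)) (s, u))
    (by
      have : Function.uncurry (fun s u => A.indicator (fun _ => (1:ℝ)) (s, u))
        = A.indicator (fun _ => (1:ℝ)) := by ext ⟨a, b⟩; rfl
      rw [this]
      exact (integrable_const _).indicator hA)
  have hL : ∫ s in Ioc 0 π, |t - s| ∂P.measure =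
      ∫ s in Ioc 0 π, (∫ u in Icc 0 π, A.indicator (fun _ => (1:ℝ)) (s, u)) ∂P.measure := by
    refine setIntegral_congr_fun measurableSet_Ioc ?_
    intro s hs
    have : (fun u => A.indicator (fun _ => (1:ℝ)) (s, u)) =
        (Ico (min s t) (max s t)).indicator 1 := by
      ext u
      by_cases hu : (s, u) ∈ A
      · rw [indicator_of_mem hu, indicator_of_mem]; rfl
        simp only [A, mem_ofPred_eq] at hu
        simp only [mem_Ico, min_le_iff, lt_max_iff]
        grind
      · rw [indicator_of_notMem hu, indicator_of_notMem]
        simp only [A, mem_ofPred_eq] at hu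
        simp only [mem_Ico, min_le_iff, lt_max_iff]
        grind
    simp only [this]
    rw [integral_indicator_one measurableSet_Ico, measureReal_restrict_apply measurableSet_Ico,
      inter_eq_left.2, Real.volume_real_Ico_of_le min_le_max, max_sub_min_eq_abs]
    · intro u hu
      have := hs.1; have := hs.2
      simp only [mem_Ico, min_le_iff, lt_max_iff] at hu
      constructor <;> rcases hu with ⟨h | h, h' | h'⟩ <;> linarith
  have hR : ∀ u ∈ Icc 0 π, ∫ s in Ioc 0 π, A.indicator (fun _ => (1:ℝ)) (s, u) ∂P.measure =
      if u < t then P u - P 0 else P π - P u := by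
    intro u hu
    have : (fun s => A.indicator (fun _ => (1:ℝ)) (s, u)) =
        (if u < t then Iic u else Ioi u).indicator 1 := by
      ext s
      by_cases hs : (s, u) ∈ A
      · rw [indicator_of_mem hs, indicator_of_mem]; rfl
        simp only [A, mem_ofPred_eq] at hs
        split_ifs <;> simp only [mem_Iic, mem_Ioi] <;> grind
      · rw [indicator_of_notMem hs, indicator_of_notMem]
        simp only [A, mem_ofPred_eq] at hs
        split_ifs <;> simp only [mem_Iic, mem_Ioi] <;> grind
    simp only [this]
    split_ifs with hut
    · rw [integral_indicator_one measurableSet_Iic, measureReal_restrict_apply measurableSet_Iic]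
      have : Iic u ∩ Ioc 0 π = Ioc 0 u := by
        ext s; simp only [mem_inter_iff, mem_Iic, mem_Ioc]
        have := hu.2
        constructor <;> intro h <;> grind
      rw [this, measureReal_def, P.measure_Ioc, ENNReal.toReal_ofReal]
      linarith [P.mono hu.1]
    · rw [integral_indicator_one measurableSet_Ioi, measureReal_restrict_apply measurableSet_Ioi]
      have : Ioi u ∩ Ioc 0 π = Ioc u π := by
        ext s; simp only [mem_inter_iff, mem_Ioi, mem_Ioc]
        have := hu.1
        constructor <;> intro h <;> grind
      rw [this, measureReal_def, P.measure_Ioc, ENNReal.toReal_ofReal]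
      linarith [P.mono hu.2]
  rw [hL, hsw, setIntegral_congr_fun measurableSet_Icc hR, integral_Icc_eq_integral_Ioc,
    ← intervalIntegral.integral_of_le hpi.le]
  have hne : ∀ᵐ u : ℝ, u ≠ t := by simp [ae_iff, measure_singleton]
  have e1 : ∀ᵐ u : ℝ, u ∈ uIoc 0 t → P u - P 0 = (if u < t then P u - P 0 else P π - P u) := by
    filter_upwards [hne] with u hu hut
    rw [uIoc_of_le h0] at hut
    rw [if_pos (lt_of_le_of_ne hut.2 hu)]
  have e2 : ∀ᵐ u : ℝ, u ∈ uIoc t π → P π - P u = (if u < t then P u - P 0 else P π - P u) := by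
    refine Eventually.of_forall fun u hut => ?_
    rw [uIoc_of_le h1] at hut
    rw [if_neg (not_lt.2 hut.1.le)]
  have i1 := (hint 0 t).sub (intervalIntegrable_const (μ := volume) (c := P 0))
  have i2 := (intervalIntegrable_const (μ := volume) (c := P π)).sub (hint t π)
  rw [← intervalIntegral.integral_add_adjacent_intervals (b := t)
    (i1.congr_ae ((ae_restrict_iff' measurableSet_uIoc).2 e1))
    (i2.congr_ae ((ae_restrict_iff' measurableSet_uIoc).2 e2)),
    ← intervalIntegral.integral_congr_ae e1, ← intervalIntegral.integral_congr_ae e2,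
    intervalIntegral.integral_sub (hint _ _) (by simp),
    intervalIntegral.integral_sub (by simp) (hint _ _)]
  simp only [intervalIntegral.integral_const, smul_eq_mul]
  ring

lemma dS1_exp {t s : ℝ} (h : |t - s| ≤ π) : dS1 (Circle.exp t) (Circle.exp s) = |t - s| := by
  unfold dS1
  have : ((Circle.exp t : ℂ) * (starRingEnd ℂ) (Circle.exp s : ℂ)).re = Real.cos |t - s| := by
    rw [Real.cos_abs, Circle.coe_exp, Circle.coe_exp, ← Complex.exp_conj, ← Complex.exp_add]
    have : (t : ℂ) * I + (starRingEnd ℂ) (s * I) = ((t - s : ℝ) : ℂ) * I := by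
      simp; ring
    rw [this, Complex.exp_ofReal_mul_I_re]
  rw [this, Real.arccos_cos (abs_nonneg _) h]

lemma coe_antipode (x : Circle) : (antipode x : ℂ) = -x := by
  simp [antipode, Circle.coe_exp]

lemma dS1_antipode_right (x y : Circle) : dS1 x (antipode y) = π - dS1 x y := by
  unfold dS1
  rw [← Real.arccos_neg, coe_antipode]; simp

lemma dS1_antipode_left (x y : Circle) : dS1 (antipode x) y = π - dS1 x y := by
  unfold dS1
  rw [← Real.arccos_neg, coe_antipode]; simp

lemma antipode_antipode (x : Circle) : antipode (antipode x) = x := by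
  apply Circle.ext; simp [coe_antipode]

lemma antipode_exp (t : ℝ) : antipode (Circle.exp t) = Circle.exp (t + π) := by
  rw [antipode, add_comm, Circle.exp_add]

lemma continuous_antipode : Continuous antipode := by
  unfold antipode; fun_prop

lemma continuous_dS1 (x : Circle) : Continuous (fun y => dS1 x y) := by
  unfold dS1
  fun_prop

lemma integrable_dS1 (x : Circle) (μ : Measure Circle) [IsFiniteMeasure μ] :
    Integrable (fun y => dS1 x y) μ := by
  refine Integrable.of_bound (continuous_dS1 x).measurable.aestronglyMeasurable π ?_
  refine Eventually.of_forall fun y => ?_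
  rw [Real.norm_eq_abs, abs_of_nonneg (show 0 ≤ dS1 x y from Real.arccos_nonneg _)]
  exact Real.arccos_le_pi _

lemma fRep_eq (l : SignedMeasure Circle) (μ ν : Measure Circle) [IsFiniteMeasure μ]
    [IsFiniteMeasure ν] (h : l = μ.toSignedMeasure - ν.toSignedMeasure) (x : Circle) :
    fRep l x = (∫ y, dS1 x y ∂μ) - ∫ y, dS1 x y ∂ν := by
  have h2 := l.toSignedMeasure_toJordanDecomposition
  unfold JordanDecomposition.toSignedMeasure at h2
  unfold fRep sInt
  set p := l.toJordanDecomposition.posPart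
  set n := l.toJordanDecomposition.negPart
  have h3 : p + ν = μ + n := by
    rw [← Measure.toSignedMeasure_eq_toSignedMeasure_iff, Measure.toSignedMeasure_add,
      Measure.toSignedMeasure_add]
    have h2 := h2.trans h
    exact sub_eq_sub_iff_add_eq_add.1 h2
  have h4 : ∫ y, dS1 x y ∂(p + ν) = ∫ y, dS1 x y ∂(μ + n) := by rw [h3]
  rw [integral_add_measure (integrable_dS1 _ _) (integrable_dS1 _ _),
    integral_add_measure (integrable_dS1 _ _) (integrable_dS1 _ _)] at h4
  linarith

lemma integral_haus (x : Circle) : ∫ y, dS1 x y ∂hausOne = π / 2 := by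
  have hpi := Real.pi_pos
  have hc : Continuous (fun s => dS1 x (Circle.exp s)) := (continuous_dS1 x).comp Circle.exp.continuous
  unfold hausOne
  rw [integral_smul_measure, integral_map Circle.exp.continuous.measurable.aemeasurable
    (continuous_dS1 x).measurable.aestronglyMeasurable, integral_Ico_eq_integral_Ioc,
    ← intervalIntegral.integral_of_le (by positivity)]
  have : ∫ s in (0:ℝ)..(2*π), dS1 x (Circle.exp s) = π * π := by
    rw [← intervalIntegral.integral_add_adjacent_intervals (b := π)
      (hc.intervalIntegrable _ _) (hc.intervalIntegrable _ _)]
    have h2 : ∫ s in π..(2*π), dS1 x (Circle.exp s) = ∫ s in (0:ℝ)..π, (π - dS1 x (Circle.exp s)) := by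
      have := intervalIntegral.integral_comp_add_right (a := 0) (b := π)
        (fun s => dS1 x (Circle.exp s)) π
      rw [zero_add, ← two_mul] at this
      rw [← this]
      simp only [← antipode_exp, dS1_antipode_right]
    rw [h2, intervalIntegral.integral_sub (by simp) (hc.intervalIntegrable _ _)]
    simp
  rw [this, ENNReal.toReal_inv, ENNReal.toReal_ofReal (by positivity), smul_eq_mul]
  field_simp

lemma continuous_of_lip (f : Circle → ℝ) (hLip : LipschitzCircle f) : Continuous f := by
  obtain ⟨K, hK⟩ := hLip
  rw [continuous_iff_continuousAt]
  intro x
  have h0 : dS1 x x = 0 := by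
    unfold dS1
    rw [Complex.mul_conj]; simp
  have h1 : Tendsto (fun y => K * dS1 x y) (nhds x) (nhds 0) := by
    have := ((continuous_dS1 x).const_mul K : Continuous fun y => K * dS1 x y).tendsto x
    rwa [h0, mul_zero] at this
  refine tendsto_iff_norm_sub_tendsto_zero.2 ?_
  refine squeeze_zero (fun _ => norm_nonneg _) (fun y => ?_) h1
  rw [Real.norm_eq_abs, abs_sub_comm]
  exact hK x y

lemma deriv_antipode (C : ℝ) (f : Circle → ℝ)
    (hA : ∀ x : Circle, f x + f (antipode x) = π * C)
    (f' : Circle → ℝ) (hf' : ∀ x : Circle, HasLeftDerivCircleAt f (f' x) x) (x : Circle) :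
    f' (antipode x) = - f' x := by
  have h1 := hf' (antipode x)
  have h2 := (hf' x).neg
  refine tendsto_nhds_unique h1 (h2.congr fun s => ?_)
  have e : Circle.exp s * antipode x = antipode (Circle.exp s * x) := by
    unfold antipode; rw [mul_left_comm]
  rw [e, ← neg_div]
  congr 1
  linarith [hA x, hA (Circle.exp s * x)]

lemma ftc (f : Circle → ℝ) (hc : Continuous f)
    (f' : Circle → ℝ) (hf' : ∀ x : Circle, HasLeftDerivCircleAt f (f' x) x) {a b : ℝ}
    (hi : IntervalIntegrable (fun t => f' (Circle.exp t)) volume a b) :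
    ∫ t in a..b, f' (Circle.exp t) = f (Circle.exp b) - f (Circle.exp a) := by
  have hH : ∀ r : ℝ, HasDerivWithinAt (fun r => f (Circle.exp (-r))) (- f' (Circle.exp (-r)))
      (Ioi r) r := by
    intro r
    rw [hasDerivWithinAt_iff_tendsto_slope' (by simp)]
    have h1 : Tendsto (fun u : ℝ => r - u) (nhdsWithin r (Ioi r)) (nhdsWithin 0 (Iio 0)) := by
      apply tendsto_nhdsWithin_of_tendsto_nhds_of_eventually_within
      · have : Tendsto (fun u : ℝ => r - u) (nhds r) (nhds (r - r)) :=
          (continuous_const.sub continuous_id).tendsto r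
        rw [sub_self] at this
        exact this.mono_left nhdsWithin_le_nhds
      · filter_upwards [self_mem_nhdsWithin] with u hu
        simpa using hu
    refine ((hf' (Circle.exp (-r))).neg.comp h1).congr fun u => ?_
    simp only [Function.comp, slope, vsub_eq_sub, smul_eq_mul]
    rw [← Circle.exp_add, show r - u + -r = -u by ring, show r - u = -(u - r) by ring, div_neg,
      neg_neg, div_eq_inv_mul]
  have hi' : IntervalIntegrable (fun r => - f' (Circle.exp (-r))) volume (-b) (-a) := by
    have := ((IntervalIntegrable.iff_comp_neg (by simp)).1 hi).neg.symm
    exact this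
  have h := intervalIntegral.integral_eq_sub_of_hasDeriv_right (a := -b) (b := -a)
    (f := fun r => f (Circle.exp (-r))) (by fun_prop) (fun r _ => hH r) hi'
  rw [intervalIntegral.integral_neg,
    intervalIntegral.integral_comp_neg (fun t => f' (Circle.exp t))] at h
  simp only [neg_neg] at h
  linarith

lemma stieltjes_ae {p : ℝ → ℝ} (hp : Monotone p) : ∀ᵐ x, hp.stieltjesFunction x = p x := by
  filter_upwards [hp.countable_not_continuousAt.ae_notMem volume] with x hx
  rw [hp.stieltjesFunction_eq]
  have : ContinuousAt p x := by simpa using hx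
  exact this.continuousWithinAt.rightLim_eq

lemma monotone_ext {p : ℝ → ℝ} (hp : MonotoneOn p (Icc 0 (2 * π))) :
    Monotone (fun x => p (max 0 (min x (2 * π))) / 4) := by
  have hpi := Real.pi_pos
  intro x y hxy
  have : p (max 0 (min x (2 * π))) ≤ p (max 0 (min y (2 * π))) := by
    apply hp
    · exact ⟨le_max_left _ _, max_le (by positivity) (min_le_right _ _)⟩
    · exact ⟨le_max_left _ _, max_le (by positivity) (min_le_right _ _)⟩
    · gcongr
  simp only
  linarith

/-- The Stieltjes data: two Stieltjes functions whose difference represents `∂₋f / 4`. -/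
lemma exists_data (C : ℝ) (f : Circle → ℝ)
    (hA : ∀ x : Circle, f x + f (antipode x) = π * C)
    (hLip : LipschitzCircle f)
    (f' : Circle → ℝ) (hf' : ∀ x : Circle, HasLeftDerivCircleAt f (f' x) x)
    (hTV : circleTV f' ≠ ⊤) :
    ∃ P Q : StieltjesFunction ℝ, P π - Q π = -(P 0 - Q 0) ∧
      ∀ a b : ℝ, 0 ≤ a → a ≤ b → b ≤ π → (∫ u in a..b, P u) - (∫ u in a..b, Q u) =
        (f (Circle.exp b) - f (Circle.exp a)) / 4 := by
  have hpi := Real.pi_pos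
  obtain ⟨p, q, hp, hq, hpq⟩ :=
    (show BoundedVariationOn (f' ∘ Circle.exp) (Icc 0 (2 * π)) from
      hTV).locallyBoundedVariationOn.exists_monotoneOn_sub_monotoneOn
  have hp1 := monotone_ext hp
  have hq1 := monotone_ext hq
  set p1 := (fun x => p (max 0 (min x (2 * π))) / 4) with hp1d
  set q1 := (fun x => q (max 0 (min x (2 * π))) / 4) with hq1d
  have hG : ∀ x ∈ Icc 0 (2 * π), f' (Circle.exp x) = 4 * (p1 x - q1 x) := by
    intro x hx
    have h := congrFun hpq x
    simp only [hp1d, hq1d, min_eq_left hx.2, max_eq_right hx.1]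
    simp only [Function.comp, Pi.sub_apply] at h
    rw [h]; ring
  refine ⟨hp1.stieltjesFunction, hq1.stieltjesFunction, ?_, ?_⟩
  · simp only [hp1.stieltjesFunction_eq, hq1.stieltjesFunction_eq]
    have h0 := (hp1.tendsto_rightLim 0).sub (hq1.tendsto_rightLim 0)
    have hπ := (hp1.tendsto_rightLim π).sub (hq1.tendsto_rightLim π)
    have hs : Tendsto (fun u : ℝ => u + π) (nhdsWithin 0 (Ioi 0)) (nhdsWithin π (Ioi π)) := by
      apply tendsto_nhdsWithin_of_tendsto_nhds_of_eventually_within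
      · have : Tendsto (fun u : ℝ => u + π) (nhds 0) (nhds (0 + π)) :=
          (continuous_id.add continuous_const).tendsto 0
        rw [zero_add] at this
        exact this.mono_left nhdsWithin_le_nhds
      · filter_upwards [self_mem_nhdsWithin] with u hu
        simpa using hu
    refine tendsto_nhds_unique (hπ.comp hs) (h0.neg.congr' ?_)
    filter_upwards [Ioo_mem_nhdsGT hpi] with u hu
    have e1 := hG u ⟨hu.1.le, by linarith [hu.2]⟩
    have e2 := hG (u + π) ⟨by linarith [hu.1], by linarith [hu.2]⟩
    rw [← antipode_exp, deriv_antipode C f hA f' hf'] at e2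
    simp only [Function.comp]
    linarith
  · intro a b ha hab hb
    have hsub : uIcc a b ⊆ Icc 0 (2 * π) := by
      rw [uIcc_of_le hab]; exact Icc_subset_Icc ha (by linarith)
    have hi : IntervalIntegrable (fun t => f' (Circle.exp t)) volume a b := by
      have := ((hp1.intervalIntegrable (μ := volume) (a := a) (b := b)).sub
        (hq1.intervalIntegrable (μ := volume) (a := a) (b := b))).const_mul 4
      refine this.congr_ae ((ae_restrict_iff' measurableSet_uIoc).2 (Eventually.of_forall ?_))
      intro x hx
      exact (hG x (hsub (uIoc_subset_uIcc hx))).symm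
    have h := ftc f (continuous_of_lip f hLip) f' hf' hi
    have e1 : ∫ u in a..b, hp1.stieltjesFunction u = ∫ u in a..b, p1 u :=
      intervalIntegral.integral_congr_ae ((stieltjes_ae hp1).mono fun x hx _ => hx)
    have e2 : ∫ u in a..b, hq1.stieltjesFunction u = ∫ u in a..b, q1 u :=
      intervalIntegral.integral_congr_ae ((stieltjes_ae hq1).mono fun x hx _ => hx)
    have e3 : ∫ t in a..b, f' (Circle.exp t) = ∫ t in a..b, 4 * (p1 t - q1 t) :=
      intervalIntegral.integral_congr fun x hx => hG x (hsub hx)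
    rw [intervalIntegral.integral_const_mul, intervalIntegral.integral_sub
      hp1.intervalIntegrable hq1.intervalIntegrable] at e3
    rw [e1, e2]
    linarith

/-- Push-forward to the circle of the Stieltjes measure on `(0, π]`. -/
def nuM (P : StieltjesFunction ℝ) : Measure Circle :=
  Measure.map Circle.exp (P.measure.restrict (Ioc 0 π))

instance (P : StieltjesFunction ℝ) : IsFiniteMeasure (nuM P) := by
  have : IsFiniteMeasure (P.measure.restrict (Ioc 0 π)) := ⟨by simp [P.measure_Ioc]⟩
  unfold nuM
  infer_instance

lemma nuM_univ (P : StieltjesFunction ℝ) : (nuM P).real univ = P π - P 0 := by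
  unfold nuM
  rw [measureReal_def, Measure.map_apply Circle.exp.continuous.measurable MeasurableSet.univ]
  simp only [preimage_univ, Measure.restrict_apply_univ, P.measure_Ioc]
  rw [ENNReal.toReal_ofReal]
  linarith [P.mono Real.pi_pos.le]

lemma integral_nuM (P : StieltjesFunction ℝ) {t : ℝ} (h0 : 0 ≤ t) (h1 : t ≤ π) :
    ∫ y, dS1 (Circle.exp t) y ∂(nuM P) =
      (π - t) * P π - t * P 0 + (∫ u in (0:ℝ)..t, P u) - ∫ u in t..π, P u := by
  rw [← stieltjes_abs P h0 h1]
  unfold nuM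
  rw [integral_map Circle.exp.continuous.measurable.aemeasurable
    (continuous_dS1 _).measurable.aestronglyMeasurable]
  refine setIntegral_congr_fun measurableSet_Ioc fun s hs => ?_
  refine dS1_exp ?_
  rw [abs_le]
  constructor <;> linarith [hs.1, hs.2]

/-- The positive half of the antisymmetric measure. -/
def mixM (P Q : StieltjesFunction ℝ) : Measure Circle := nuM P + Measure.map antipode (nuM Q)

instance (P Q : StieltjesFunction ℝ) : IsFiniteMeasure (mixM P Q) := by
  unfold mixM; infer_instance

lemma map_mixM (P Q : StieltjesFunction ℝ) : Measure.map antipode (mixM P Q) = mixM Q P := by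
  have hm := continuous_antipode.measurable
  unfold mixM
  rw [Measure.map_add _ _ hm, Measure.map_map hm hm]
  have : antipode ∘ antipode = id := funext antipode_antipode
  rw [this, Measure.map_id, add_comm]

lemma integral_mixM (P Q : StieltjesFunction ℝ) (x : Circle) :
    ∫ y, dS1 x y ∂(mixM P Q) = (∫ y, dS1 x y ∂(nuM P)) + π * (Q π - Q 0)
      - ∫ y, dS1 x y ∂(nuM Q) := by
  unfold mixM
  rw [integral_add_measure (integrable_dS1 _ _) (integrable_dS1 _ _),
    integral_map continuous_antipode.measurable.aemeasurable
    (continuous_dS1 _).measurable.aestronglyMeasurable]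
  simp only [dS1_antipode_right]
  rw [integral_sub (integrable_const _) (integrable_dS1 _ _), integral_const, nuM_univ, smul_eq_mul]
  ring

theorem stmt1 (C : ℝ) (f : Circle → ℝ)
    (hA : ∀ x : Circle, f x + f (antipode x) = π * C)
    (hLip : LipschitzCircle f)
    (f' : Circle → ℝ) (hf' : ∀ x : Circle, HasLeftDerivCircleAt f (f' x) x)
    (hTV : circleTV f' ≠ ⊤) :
    ∃ lam : SignedMeasure Circle, lam.map antipode = -lam ∧
      ∀ x : Circle, f x = fRep (lam + C • hausOne.toSignedMeasure) x := by
  have hpi := Real.pi_pos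
  obtain ⟨P, Q, hb, hPQ⟩ := exists_data C f hA hLip f' hf' hTV
  have hm := continuous_antipode.measurable
  refine ⟨(mixM P Q).toSignedMeasure - (mixM Q P).toSignedMeasure, ?_, ?_⟩
  · ext i hi
    rw [VectorMeasure.map_apply _ hm hi, Measure.toSignedMeasure_sub_apply (hm hi), neg_apply,
      Measure.toSignedMeasure_sub_apply hi, neg_sub]
    congr 1
    · rw [← map_mixM P Q, map_measureReal_apply hm hi]
    · rw [← map_mixM Q P, map_measureReal_apply hm hi]
  · have hrep : ∀ x, fRep ((mixM P Q).toSignedMeasure - (mixM Q P).toSignedMeasure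
        + C • hausOne.toSignedMeasure) x =
        2 * (∫ y, dS1 x y ∂(nuM P)) - 2 * (∫ y, dS1 x y ∂(nuM Q))
          - π * ((P π - Q π) - (P 0 - Q 0)) + C * (π / 2) := by
      intro x
      rw [fRep_eq _ (mixM P Q + C.toNNReal • hausOne) (mixM Q P + (-C).toNNReal • hausOne)]
      · rw [integral_add_measure (integrable_dS1 _ _) (integrable_dS1 _ _),
          integral_add_measure (integrable_dS1 _ _) (integrable_dS1 _ _),
          integral_mixM, integral_mixM, integral_smul_nnreal_measure, integral_smul_nnreal_measure,
          integral_haus, NNReal.smul_def, NNReal.smul_def, smul_eq_mul, smul_eq_mul,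
          Real.coe_toNNReal', Real.coe_toNNReal']
        have : max C 0 - max (-C) 0 = C := by
          rcases le_total C 0 with h | h
          · rw [max_eq_right h, max_eq_left (by linarith)]; ring
          · rw [max_eq_left h, max_eq_right (by linarith)]; ring
        linear_combination (π / 2) * this
      · have : C • hausOne.toSignedMeasure = C.toNNReal • hausOne.toSignedMeasure
            - (-C).toNNReal • hausOne.toSignedMeasure := by
          have hC : C = max C 0 - max (-C) 0 := by
            rcases le_total C 0 with h | h
            · rw [max_eq_right h, max_eq_left (by linarith)]; ring
            · rw [max_eq_left h, max_eq_right (by linarith)]; ring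
          ext i hi
          rw [_root_.sub_apply, _root_.smul_apply, _root_.smul_apply, _root_.smul_apply,
            NNReal.smul_def, NNReal.smul_def, Real.coe_toNNReal', Real.coe_toNNReal',
            smul_eq_mul, smul_eq_mul, smul_eq_mul, ← sub_mul, ← hC]
        rw [this, Measure.toSignedMeasure_add, Measure.toSignedMeasure_add,
          Measure.toSignedMeasure_smul, Measure.toSignedMeasure_smul]
        abel
    have hmain : ∀ t, 0 ≤ t → t ≤ π → f (Circle.exp t) =
        fRep ((mixM P Q).toSignedMeasure - (mixM Q P).toSignedMeasure
          + C • hausOne.toSignedMeasure) (Circle.exp t) := by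
      intro t h0 h1
      rw [hrep, integral_nuM P h0 h1, integral_nuM Q h0 h1]
      have a1 := hPQ 0 t le_rfl h0 h1
      have a2 := hPQ t π h0 h1 le_rfl
      have a3 := hA (Circle.exp 0)
      rw [antipode_exp, zero_add] at a3
      linear_combination (-2) * a1 + 2 * a2 + (1/2) * a3 - (π - 2 * t) * hb
    have hanti : ∀ x, fRep ((mixM P Q).toSignedMeasure - (mixM Q P).toSignedMeasure
          + C • hausOne.toSignedMeasure) (antipode x) = π * C -
        fRep ((mixM P Q).toSignedMeasure - (mixM Q P).toSignedMeasure
          + C • hausOne.toSignedMeasure) x := by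
      intro x
      rw [hrep, hrep]
      simp only [dS1_antipode_left]
      rw [integral_sub (integrable_const _) (integrable_dS1 _ _),
        integral_sub (integrable_const _) (integrable_dS1 _ _), integral_const, integral_const,
        nuM_univ, nuM_univ, smul_eq_mul, smul_eq_mul]
      ring
    intro x
    obtain ⟨t, ht1, ht2, rfl⟩ : ∃ t, -π < t ∧ t ≤ π ∧ Circle.exp t = x :=
      ⟨Complex.arg x, Complex.neg_pi_lt_arg _, Complex.arg_le_pi _, Circle.exp_arg x⟩
    rcases le_total 0 t with h | h
    · exact hmain t h ht2
    · have h2 := hmain (t + π) (by linarith) (by linarith)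
      rw [← antipode_exp, hanti] at h2
      linarith [hA (Circle.exp t)]

end CirclePaper
end
end

section
/- Let C ∈ ℝ and let f : S¹ → ℝ satisfy: (A) f(x) + f(−x) = πC for all x ∈ S¹; and (B) f is Lipschitz continuous, left-differentiable at every point of S¹, and ‖∂₋f‖_TV(S¹) < ∞. Set h = f ∘ q. Then ∂₋h is left-continuous, and letting λ* be the Lebesgue–Stieltjes measure of ∂₋h on [−π, π), i.e., the unique signed Borel measure on [−π, π) with λ*([s, t)) = ∂₋h(t) − ∂₋h(s) for all −π ≤ s ≤ t < π, and λ = q_#λ*, one has for every t ∈ [0, π): ∫_{S¹} d_{S¹}(q(t), y) λ(dy) = 2·∫_{t−π}^{t} ∂₋h(s) ds = 4·f(q(t)) − 2πC. -/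
open MeasureTheory Real Filter Set Complex
open scoped ENNReal NNReal Classical

noncomputable section

namespace CirclePaper

lemma dS1_exp_eq (s t : ℝ) : dS1 (Circle.exp s) (Circle.exp t) = Real.arccos (Real.cos (s - t)) := by
  unfold dS1
  congr 1
  simp [Circle.coe_exp, Complex.exp_ofReal_mul_I_re, Complex.exp_ofReal_mul_I_im, Real.cos_sub]

lemma dS1_exp_le (s t : ℝ) : dS1 (Circle.exp s) (Circle.exp t) ≤ |s - t| := by
  rw [dS1_exp_eq]
  by_cases h : |s - t| ≤ π
  · rw [← Real.cos_abs, Real.arccos_cos (abs_nonneg _) h]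
  · exact (Real.arccos_le_pi _).trans (not_le.1 h).le

lemma dS1_formula {t y : ℝ} (ht : t ∈ Ico 0 π) (hy : y ∈ Ico (-π) π) :
    dS1 (Circle.exp t) (Circle.exp y) = (π - t)
        + max (min (t - π) y - (-π)) 0 - max (min t y - (t - π)) 0 + max (min π y - t) 0 := by
  obtain ⟨h1, h2⟩ := ht
  obtain ⟨h3, h4⟩ := hy
  rw [dS1_exp_eq]
  rcases le_total y (t - π) with h5 | h5
  · have : Real.cos (t - y) = Real.cos (2 * π - (t - y)) := by rw [Real.cos_two_pi_sub]
    rw [this, Real.arccos_cos (by linarith) (by linarith), min_eq_right h5,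
      min_eq_right (by linarith : y ≤ t), min_eq_right h4.le, max_eq_left (by linarith),
      max_eq_right (by linarith), max_eq_right (by linarith)]
    ring
  · rcases le_total y t with h6 | h6
    · rw [Real.arccos_cos (by linarith) (by linarith), min_eq_left h5,
        min_eq_right h6, min_eq_right h4.le, max_eq_left (by linarith),
        max_eq_left (by linarith), max_eq_right (by linarith)]
      ring
    · rw [← Real.cos_neg, Real.arccos_cos (by linarith) (by linarith), min_eq_left h5,
        min_eq_left h6, min_eq_right h4.le, max_eq_left (by linarith),
        max_eq_left (by linarith), max_eq_left (by linarith)]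
      ring

lemma leftDeriv_bound {h : ℝ → ℝ} {K L t : ℝ} (hL : ∀ s t, |h s - h t| ≤ |K| * |s - t|)
    (hd : HasLeftDerivAtR h L t) : |L| ≤ |K| := by
  have h1 := hd.abs
  refine le_of_tendsto h1 ?_
  filter_upwards [self_mem_nhdsWithin] with s hs
  have hs' : s ≠ 0 := ne_of_lt hs
  rw [abs_div, div_le_iff₀ (abs_pos.2 hs')]
  simpa using hL (t + s) t

lemma leftDeriv_measurable {h h' : ℝ → ℝ} (hc : Continuous h)
    (hd : ∀ t, HasLeftDerivAtR h (h' t) t) : Measurable h' := by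
  obtain ⟨u, hu1, hu2, hu3⟩ := exists_seq_strictMono_tendsto (0 : ℝ)
  have h2 : Tendsto u atTop (nhdsWithin 0 (Iio 0)) :=
    tendsto_nhdsWithin_iff.2 ⟨hu3, Eventually.of_forall hu2⟩
  refine measurable_of_tendsto_metrizable (f := fun n t => (h (t + u n) - h t) / u n) ?_ ?_
  · intro n
    have : Continuous fun t => (h (t + u n) - h t) / u n := by fun_prop
    exact this.measurable
  · rw [tendsto_pi_nhds]
    intro t
    exact (hd t).comp h2

lemma left_FTC {h h' : ℝ → ℝ} (hc : Continuous h) (hd : ∀ t, HasLeftDerivAtR h (h' t) t)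
    (hInteg : ∀ a b, IntervalIntegrable h' volume a b) (a b : ℝ) :
    ∫ s in a..b, h' s = h b - h a := by
  have h1 := intervalIntegral.integral_eq_sub_of_hasDeriv_right (a := -b) (b := -a)
    (f := fun x => - h (-x)) (f' := fun x => h' (-x)) (by fun_prop) ?_ ?_
  · rw [intervalIntegral.integral_comp_neg] at h1
    simp only [neg_neg] at h1
    rw [h1]; ring
  · intro x _
    rw [hasDerivWithinAt_iff_tendsto_slope' self_notMem_Ioi]
    have h2 : Tendsto (fun y => x - y) (nhdsWithin x (Ioi x)) (nhdsWithin 0 (Iio 0)) := by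
      refine tendsto_nhdsWithin_iff.2 ⟨?_, ?_⟩
      · have : Tendsto (fun y => x - y) (nhds x) (nhds (x - x)) :=
          (continuous_const.sub continuous_id).tendsto x
        rw [sub_self] at this
        exact this.mono_left nhdsWithin_le_nhds
      · filter_upwards [self_mem_nhdsWithin] with s hs
        simpa using hs
    refine ((hd (-x)).comp h2).congr fun y => ?_
    simp only [Function.comp, slope_def_field]
    rw [show -x + (x - y) = -y by ring, ← neg_sub y x, div_neg, ← neg_div]
    congr 1
    ring
  · have := (hInteg b a).comp_sub_left 0
    simpa using this

lemma left_lim_eq {h h' : ℝ → ℝ} {t L : ℝ} (hFTC : ∀ a b, ∫ s in a..b, h' s = h b - h a)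
    (hInteg : ∀ a b, IntervalIntegrable h' volume a b)
    (hd : HasLeftDerivAtR h (h' t) t) (hL : Tendsto h' (nhdsWithin t (Iio t)) (nhds L)) :
    h' t = L := by
  refine tendsto_nhds_unique hd ?_
  rw [Metric.tendsto_nhds]
  intro ε hε
  have h1 := (Metric.tendsto_nhds.1 hL) (ε / 2) (by positivity)
  obtain ⟨l, hl, hsub⟩ := (mem_nhdsLT_iff_exists_Ioo_subset).1 h1
  have hl' : l - t < 0 := sub_neg.2 hl
  filter_upwards [Ioo_mem_nhdsLT hl'] with s hs
  have hs0 : s < 0 := hs.2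
  have h2 : ‖∫ x in (t + s)..t, (h' x - L)‖ ≤ (ε / 2) * |t - (t + s)| := by
    refine intervalIntegral.norm_integral_le_of_norm_le_const_ae ?_
    have : ∀ᵐ x : ℝ, x ≠ t := by simp [ae_iff]
    filter_upwards [this] with x hx hx2
    rw [uIoc_of_le (by linarith)] at hx2
    have hx3 : x ∈ Ioo l t := ⟨by linarith [hs.1, hx2.1], lt_of_le_of_ne hx2.2 hx⟩
    have := hsub hx3
    simp only [mem_ofPred_eq, Real.dist_eq] at this
    exact this.le
  rw [intervalIntegral.integral_sub (hInteg _ _) intervalIntegrable_const, hFTC] at h2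
  simp only [intervalIntegral.integral_const, smul_eq_mul, Real.norm_eq_abs] at h2
  rw [show t - (t + s) = -s by ring, abs_neg] at h2
  have hs1 : 0 < |s| := abs_pos.2 hs0.ne
  rw [Real.dist_eq]
  have h3 : (h (t + s) - h t) / s - L = -(h t - h (t + s) - -s * L) / s := by
    have := hs0.ne
    rw [eq_div_iff this, sub_mul, div_mul_cancel₀ _ this]
    ring
  rw [h3, abs_div, abs_neg, div_lt_iff₀ hs1]
  nlinarith

lemma tail_integrable (μ : Measure ℝ) [IsFiniteMeasure μ] (a b : ℝ) :
    IntervalIntegrable (fun s => μ.real (Ici s)) volume a b := by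
  have : Antitone fun s => μ.real (Ici s) := fun x y hxy =>
    measureReal_mono (Ici_subset_Ici.2 hxy)
  exact this.intervalIntegrable

lemma clamp_integrable (μ : Measure ℝ) [IsFiniteMeasure μ] (a b : ℝ) :
    Integrable (fun y => max (min b y - a) 0) μ := by
  refine Integrable.of_bound (C := |b - a|) ?_ ?_
  · have : Continuous fun y : ℝ => max (min b y - a) 0 := by fun_prop
    exact this.aestronglyMeasurable
  · filter_upwards with y
    rw [Real.norm_eq_abs, abs_of_nonneg (le_max_right _ _)]
    refine max_le ?_ (abs_nonneg _)
    exact (sub_le_sub_right (min_le_left _ _) _).trans (le_abs_self _)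

lemma clamp_integral (μ : Measure ℝ) [IsFiniteMeasure μ] {a b : ℝ} (hab : a ≤ b) :
    ∫ y, max (min b y - a) 0 ∂μ = ∫ s in a..b, μ.real (Ici s) := by
  have hS : MeasurableSet {p : ℝ × ℝ | p.2 ≤ p.1} := measurableSet_le measurable_snd measurable_fst
  have hi : Integrable (Function.uncurry fun y s : ℝ =>
      ({p : ℝ × ℝ | p.2 ≤ p.1}.indicator (fun _ => (1 : ℝ))) (y, s))
      (μ.prod (volume.restrict (Ioc a b))) := by
    exact (integrable_const (1 : ℝ)).indicator hS
  have h1 := integral_integral_swap hi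
  rw [intervalIntegral.integral_of_le hab]
  refine Eq.trans (Eq.trans ?_ h1) ?_
  · congr 1
    ext y
    have : (fun s : ℝ => ({p : ℝ × ℝ | p.2 ≤ p.1}.indicator (fun _ => (1 : ℝ))) (y, s))
        = (Iic y).indicator 1 := by
      ext s; simp [indicator]
    rw [this, integral_indicator_one measurableSet_Iic, measureReal_restrict_apply measurableSet_Iic,
      inter_comm, Ioc_inter_Iic, Measure.real, Real.volume_Ioc, ENNReal.toReal_ofReal']
  · congr 1
    ext s
    have : (fun y : ℝ => ({p : ℝ × ℝ | p.2 ≤ p.1}.indicator (fun _ => (1 : ℝ))) (y, s))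
        = (Ici s).indicator 1 := by
      ext s; simp [indicator]
    rw [this, integral_indicator_one measurableSet_Ici]

lemma sInt_eq (l : SignedMeasure Circle) (μ ν : Measure Circle) [IsFiniteMeasure μ]
    [IsFiniteMeasure ν] (hl : ∀ A, MeasurableSet A → l A = μ.real A - ν.real A)
    {g : Circle → ℝ} (hg : Continuous g) :
    sInt l g = (∫ y, g y ∂μ) - ∫ y, g y ∂ν := by
  have hInteg : ∀ (ρ : Measure Circle) [IsFiniteMeasure ρ], Integrable g ρ := fun ρ _ =>
    hg.integrable_of_hasCompactSupport (HasCompactSupport.of_compactSpace g)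
  unfold sInt
  set J := l.toJordanDecomposition with hJ
  have h1 : J.posPart + ν = μ + J.negPart := by
    refine Measure.ext fun A hA => ?_
    have h2 := hl A hA
    rw [← SignedMeasure.toSignedMeasure_toJordanDecomposition l,
      JordanDecomposition.toSignedMeasure, VectorMeasure.sub_apply,
      Measure.toSignedMeasure_apply_measurable hA,
      Measure.toSignedMeasure_apply_measurable hA, ← hJ] at h2
    refine (measureReal_eq_measureReal_iff (by finiteness) (by finiteness)).1 ?_
    rw [measureReal_add_apply, measureReal_add_apply]
    linarith
  have h3 := congrArg (fun ρ => ∫ y, g y ∂ρ) h1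
  rw [integral_add_measure (hInteg _) (hInteg _), integral_add_measure (hInteg _) (hInteg _)] at h3
  linarith

/-- Under (A) and (B), `∂₋h` is left-continuous for `h = f ∘ q`, and if
`λ*` is the Lebesgue–Stieltjes measure of `∂₋h` on `[-π, π)` and `λ = q_#λ*`, then for
every `t ∈ [0, π)`:
`∫ d(q(t), y) λ(dy) = 2·∫_{t-π}^{t} ∂₋h(s) ds = 4 f(q(t)) - 2πC`. -/
theorem stmt12 (C : ℝ) (f : Circle → ℝ)
    (hA : ∀ x : Circle, f x + f (antipode x) = π * C)
    (hLip : LipschitzCircle f)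
    (f' : Circle → ℝ) (hf' : ∀ x : Circle, HasLeftDerivCircleAt f (f' x) x)
    (hTV : circleTV f' ≠ ⊤)
    (h' : ℝ → ℝ) (hh' : ∀ t : ℝ, HasLeftDerivAtR (f ∘ Circle.exp) (h' t) t)
    (lamStar : SignedMeasure ℝ)
    (hconc : ∀ A : Set ℝ, MeasurableSet A → lamStar A = lamStar (A ∩ Set.Ico (-π) π))
    (hStieltjes : ∀ s t : ℝ, -π ≤ s → s ≤ t → t < π →
      lamStar (Set.Ico s t) = h' t - h' s) :
    (∀ t : ℝ, Filter.Tendsto h' (nhdsWithin t (Set.Iio t)) (nhds (h' t))) ∧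
    ∀ t ∈ Set.Ico (0 : ℝ) π,
      sInt (lamStar.map Circle.exp) (fun y => dS1 (Circle.exp t) y)
          = 2 * ∫ s in (t - π)..t, h' s ∧
      sInt (lamStar.map Circle.exp) (fun y => dS1 (Circle.exp t) y)
          = 4 * f (Circle.exp t) - 2 * π * C := by
  obtain ⟨K, hK⟩ := hLip
  set h : ℝ → ℝ := f ∘ Circle.exp with hh
  have hper : Function.Periodic h (2 * π) := by
    intro t
    simp [hh, Circle.exp_add, Circle.exp_two_pi]
  have hhLip : ∀ s t, |h s - h t| ≤ |K| * |s - t| := by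
    intro s t
    refine (hK _ _).trans ?_
    refine (mul_le_mul_of_nonneg_right (le_abs_self K) (Real.arccos_nonneg _)).trans ?_
    exact mul_le_mul_of_nonneg_left (dS1_exp_le s t) (abs_nonneg K)
  have hcont : Continuous h := by
    have : LipschitzWith ⟨|K|, abs_nonneg K⟩ h := by
      refine LipschitzWith.of_dist_le_mul fun s t => ?_
      rw [Real.dist_eq, Real.dist_eq]; exact hhLip s t
    exact this.continuous
  have hbound : ∀ t, |h' t| ≤ |K| := fun t => leftDeriv_bound hhLip (hh' t)
  have hmeas : Measurable h' := leftDeriv_measurable hcont hh'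
  have hInteg : ∀ a b, IntervalIntegrable h' volume a b := by
    intro a b
    refine IntervalIntegrable.mono_fun (g := h') (f := fun _ : ℝ => |K|)
      intervalIntegrable_const hmeas.aestronglyMeasurable ?_
    filter_upwards with x
    simpa using hbound x
  have hFTC : ∀ a b, ∫ s in a..b, h' s = h b - h a := fun a b => left_FTC hcont hh' hInteg a b
  have heq : ∀ t, h' t = f' (Circle.exp t) := by
    intro t
    refine tendsto_nhds_unique (hh' t) ?_
    have := hf' (Circle.exp t)
    unfold HasLeftDerivCircleAt at this
    refine this.congr fun s => ?_
    simp [hh, add_comm t s, Circle.exp_add]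
  have hper' : Function.Periodic h' (2 * π) := by
    intro t
    simp [heq, Circle.exp_add, Circle.exp_two_pi]
  have hleft0 : ∀ t ∈ Set.Ioc 0 (2 * π), Tendsto h' (nhdsWithin t (Iio t)) (nhds (h' t)) := by
    intro t ht
    have hbv : BoundedVariationOn h' (Icc 0 (2 * π)) := by
      have : h' = f' ∘ Circle.exp := funext heq
      rw [this]; exact hTV
    obtain ⟨L, hL⟩ := hbv.exists_tendsto_left t
    have hL' : Tendsto h' (nhdsWithin t (Iio t)) (nhds L) := by
      refine hL.mono_left ?_
      have h1 : Icc 0 (2 * π) ∩ Iio t ∈ nhdsWithin t (Iio t) := by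
        filter_upwards [Ioo_mem_nhdsLT ht.1] with x hx
        exact ⟨⟨hx.1.le, hx.2.le.trans ht.2⟩, hx.2⟩
      exact le_inf inf_le_left (le_principal_iff.2 h1)
    have : h' t = L := left_lim_eq hFTC hInteg (hh' t) hL'
    rwa [this]
  have hleft : ∀ t, Tendsto h' (nhdsWithin t (Iio t)) (nhds (h' t)) := by
    intro t
    obtain ⟨n, hn, -⟩ := existsUnique_add_zsmul_mem_Ioc (by positivity : 0 < 2 * π) t 0
    rw [zero_add] at hn
    have h1 := hleft0 _ hn
    have h2 : ∀ s, h' (s + n • (2 * π)) = h' s := fun s => hper'.zsmul n s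
    rw [h2] at h1
    have h3 : Tendsto (fun s => s + n • (2 * π)) (nhdsWithin t (Iio t))
        (nhdsWithin (t + n • (2 * π)) (Iio (t + n • (2 * π)))) := by
      refine tendsto_nhdsWithin_iff.2 ⟨?_, ?_⟩
      · exact ((continuous_id.add continuous_const).tendsto t).mono_left nhdsWithin_le_nhds
      · filter_upwards [self_mem_nhdsWithin] with s hs
        simpa using hs
    exact (h1.comp h3).congr fun s => h2 s
  refine ⟨hleft, ?_⟩
  have hpp : h' π = h' (-π) := by
    have := hper' (-π)
    rw [← this]; congr 1; ring
  -- mass of the right tails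
  have hmass : ∀ s ∈ Ico (-π) π, lamStar (Ico s π) = h' π - h' s := by
    intro s hs
    obtain ⟨u, hu1, hu2, hu3⟩ := exists_seq_strictMono_tendsto' hs.2
    have hU : (⋃ n, Ico s (u n)) = Ico s π := by
      ext x
      simp only [mem_iUnion, mem_Ico]
      constructor
      · rintro ⟨n, h1, h2⟩
        exact ⟨h1, h2.trans (hu2 n).2⟩
      · rintro ⟨h1, h2⟩
        obtain ⟨n, hn⟩ := (hu3.eventually (lt_mem_nhds h2)).exists
        exact ⟨n, h1, hn⟩
    have h1 := VectorMeasure.tendsto_vectorMeasure_iUnion_atTop_nat (v := lamStar)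
      (s := fun n => Ico s (u n))
      (fun i j hij => Ico_subset_Ico_right (hu1.monotone hij)) (fun i => measurableSet_Ico)
    rw [hU] at h1
    refine tendsto_nhds_unique h1 ?_
    have h2 : Tendsto u atTop (nhdsWithin π (Iio π)) :=
      tendsto_nhdsWithin_iff.2 ⟨hu3, Eventually.of_forall fun n => (hu2 n).2⟩
    have h3 := ((hleft π).comp h2).sub_const (h' s)
    refine h3.congr fun n => ?_
    exact (hStieltjes s (u n) hs.1 (hu2 n).1.le (hu2 n).2).symm
  intro t ht
  set J := lamStar.toJordanDecomposition with hJ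
  set I : Set ℝ := Ico (-π) π with hI
  set μ := J.posPart.restrict I with hμ
  set ν := J.negPart.restrict I with hν
  have hval : ∀ A, MeasurableSet A → lamStar A = μ.real A - ν.real A := by
    intro A hA
    rw [hconc A hA]
    conv_lhs => rw [← SignedMeasure.toSignedMeasure_toJordanDecomposition lamStar]
    rw [JordanDecomposition.toSignedMeasure, VectorMeasure.sub_apply,
      Measure.toSignedMeasure_apply_measurable (hA.inter measurableSet_Ico),
      Measure.toSignedMeasure_apply_measurable (hA.inter measurableSet_Ico),
      measureReal_restrict_apply hA, measureReal_restrict_apply hA]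
  have htail : ∀ s ∈ Icc (-π) π, μ.real (Ici s) - ν.real (Ici s) = h' π - h' s := by
    intro s hs
    rw [← hval _ measurableSet_Ici, hconc _ measurableSet_Ici]
    have : Ici s ∩ Ico (-π) π = Ico s π := by
      ext x
      simp only [mem_inter_iff, mem_Ici, mem_Ico]
      constructor
      · rintro ⟨h1, h2, h3⟩; exact ⟨h1, h3⟩
      · rintro ⟨h1, h2⟩; exact ⟨h1, hs.1.trans h1, h2⟩
    rw [this]
    rcases hs.2.lt_or_eq with h1 | h1
    · exact hmass s ⟨hs.1, h1⟩
    · subst h1; simp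
  have hclamp : ∀ a b, -π ≤ a → a ≤ b → b ≤ π →
      (∫ y, max (min b y - a) 0 ∂μ) - (∫ y, max (min b y - a) 0 ∂ν)
        = (b - a) * h' π - (h b - h a) := by
    intro a b ha hab hb
    rw [clamp_integral μ hab, clamp_integral ν hab,
      ← intervalIntegral.integral_sub (tail_integrable μ a b) (tail_integrable ν a b)]
    have : ∫ s in a..b, (μ.real (Ici s) - ν.real (Ici s)) = ∫ s in a..b, (h' π - h' s) := by
      refine intervalIntegral.integral_congr fun s hs => ?_
      rw [uIcc_of_le hab] at hs
      exact htail s ⟨ha.trans hs.1, hs.2.trans hb⟩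
    rw [this, intervalIntegral.integral_sub intervalIntegrable_const (hInteg a b), hFTC]
    simp
  have hdist : ∀ (ρ : Measure ℝ) [IsFiniteMeasure ρ], (∀ᵐ y ∂ρ, y ∈ I) →
      ∫ y, dS1 (Circle.exp t) (Circle.exp y) ∂ρ = (π - t) * ρ.real univ
        + (∫ y, max (min (t - π) y - (-π)) 0 ∂ρ) - (∫ y, max (min t y - (t - π)) 0 ∂ρ)
        + ∫ y, max (min π y - t) 0 ∂ρ := by
    intro ρ _ hρ
    have hi : ∀ a b, Integrable (fun y => max (min b y - a) 0) ρ := clamp_integrable ρ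
    rw [show (π - t) * ρ.real univ = ∫ y, (π - t) ∂ρ by simp [mul_comm],
      ← integral_add (integrable_const _) (hi _ _), ← integral_sub _ (hi _ _),
      ← integral_add _ (hi _ _)]
    · refine integral_congr_ae ?_
      filter_upwards [hρ] with y hy
      exact dS1_formula ht hy
    · exact ((integrable_const _).add (hi _ _)).sub (hi _ _)
    · exact (integrable_const _).add (hi _ _)
  have hmem : ∀ ρ : Measure ℝ, ∀ᵐ y ∂(ρ.restrict I), y ∈ I :=
    fun ρ => ae_restrict_mem measurableSet_Ico
  have htot : μ.real univ - ν.real univ = 0 := by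
    rw [← hval _ MeasurableSet.univ, hconc _ MeasurableSet.univ, univ_inter,
      hmass (-π) ⟨le_rfl, by linarith [Real.pi_pos]⟩, hpp, sub_self]
  have hexp : Measurable (Circle.exp : ℝ → Circle) := Circle.exp.continuous.measurable
  have hcd : Continuous (fun y : Circle => dS1 (Circle.exp t) y) := by
    unfold dS1
    fun_prop
  have key : sInt (lamStar.map Circle.exp) (fun y => dS1 (Circle.exp t) y)
      = (∫ y, dS1 (Circle.exp t) (Circle.exp y) ∂μ)
        - ∫ y, dS1 (Circle.exp t) (Circle.exp y) ∂ν := by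
    rw [sInt_eq (lamStar.map Circle.exp) (μ.map Circle.exp) (ν.map Circle.exp) ?_ hcd,
      integral_map hexp.aemeasurable hcd.aestronglyMeasurable,
      integral_map hexp.aemeasurable hcd.aestronglyMeasurable]
    intro A hA
    rw [VectorMeasure.map_apply _ hexp hA, hval _ (hexp hA),
      map_measureReal_apply hexp hA, map_measureReal_apply hexp hA]
  have hanti : ∀ s, h (s - π) = π * C - h s := by
    intro s
    have h1 := hA (Circle.exp (s - π))
    rw [antipode, ← Circle.exp_add] at h1
    rw [show π + (s - π) = s by ring] at h1
    simp only [hh, Function.comp]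
    linarith
  have fin : sInt (lamStar.map Circle.exp) (fun y => dS1 (Circle.exp t) y)
      = 2 * (h t - h (t - π)) := by
    rw [key, hdist μ (hmem _), hdist ν (hmem _)]
    have c1 := hclamp (-π) (t - π) le_rfl (by linarith [ht.1]) (by linarith [ht.2, Real.pi_pos])
    have c2 := hclamp (t - π) t (by linarith [ht.1]) (by linarith [Real.pi_pos]) ht.2.le
    have c3 := hclamp t π (by linarith [ht.1, Real.pi_pos]) ht.2.le le_rfl
    have hhp : h π = h (-π) := by
      have := hper (-π)
      rw [← this]; congr 1; ring
    linear_combination c1 - c2 + c3 + (π - t) * htot - hhp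
  refine ⟨by rw [fin, hFTC], ?_⟩
  rw [fin, hanti]
  simp only [hh, Function.comp]
  ring

end CirclePaper
end
end
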